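/- Let X ∈ ℝ^{m×n} with m ≥ n, let 0 ≤ ε₁ < 1 and 0 ≤ ε₂ < 1, let Ω₁ ∈ ℝ^{s₁×m} be an ε₁-subspace embedding for the column space of X, and let Ω₂ ∈ ℝ^{s₂×s₁} be an ε₂-subspace embedding for the column space of Ω₁X. Set ε_s = ε₁ + ε₂ − ε₁ε₂ and ε_b = ε₁ + ε₂ + ε₁ε₂. Then √(1−ε_s)·σ_min(X) ≤ σ_min(Ω₂Ω₁X) ≤ ‖Ω₂Ω₁X‖₂ ≤ √(1+ε_b)·‖X‖₂. -/

import Mathlib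

open scoped BigOperators

/-- Euclidean 2-norm of a vector in `Fin m → ℝ`. -/
noncomputable def evNorm {m : ℕ} (x : Fin m → ℝ) : ℝ :=
  Real.sqrt (∑ i, x i ^ 2)

/-- Euclidean inner product of vectors in `Fin m → ℝ`. -/
noncomputable def evInner {m : ℕ} (x y : Fin m → ℝ) : ℝ :=
  ∑ i, x i * y i

/-- `[X]_g`: the maximum Euclidean 2-norm among the columns of `X`. -/
noncomputable def gMax {m n : ℕ} (X : Matrix (Fin m) (Fin n) ℝ) : ℝ :=
  ⨆ j : Fin n, evNorm (fun i => X i j)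

/-- `‖X‖_g = √n · [X]_g` where `n` is the number of columns of `X`. -/
noncomputable def gNorm {m n : ℕ} (X : Matrix (Fin m) (Fin n) ℝ) : ℝ :=
  Real.sqrt n * gMax X

/-- Spectral norm (largest singular value): supremum of `‖Xv‖₂` over unit vectors `v`. -/
noncomputable def matSpectralNorm {m n : ℕ} (X : Matrix (Fin m) (Fin n) ℝ) : ℝ :=
  ⨆ v : {v : Fin n → ℝ // evNorm v = 1}, evNorm (X.mulVec v.1)

/-- Smallest singular value: infimum of `‖Xv‖₂` over unit vectors `v`. -/
noncomputable def sigmaMin {m n : ℕ} (X : Matrix (Fin m) (Fin n) ℝ) : ℝ :=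
  ⨅ v : {v : Fin n → ℝ // evNorm v = 1}, evNorm (X.mulVec v.1)

/-- Frobenius norm of a real matrix. -/
noncomputable def frobeniusNorm {m n : ℕ} (X : Matrix (Fin m) (Fin n) ℝ) : ℝ :=
  Real.sqrt (∑ i, ∑ j, X i j ^ 2)

/-- `Ω` is an `ε`-subspace embedding for the subspace `K ⊆ ℝ^m`. -/
def IsSubspaceEmbedding {s m : ℕ} (ε : ℝ) (Ω : Matrix (Fin s) (Fin m) ℝ)
    (K : Submodule ℝ (Fin m → ℝ)) : Prop :=
  ∀ x ∈ K, ∀ y ∈ K,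
    |evInner x y - evInner (Ω.mulVec x) (Ω.mulVec y)| ≤ ε * evNorm x * evNorm y

/-- Column space of a matrix: the span of its columns. -/
noncomputable def colSpace {m n : ℕ} (X : Matrix (Fin m) (Fin n) ℝ) :
    Submodule ℝ (Fin m → ℝ) :=
  Submodule.span ℝ (Set.range fun j : Fin n => fun i => X i j)

theorem evNorm_nonneg_aux {m : ℕ} (x : Fin m → ℝ) : 0 ≤ evNorm x := Real.sqrt_nonneg _

theorem evNorm_sq_aux {m : ℕ} (x : Fin m → ℝ) : evNorm x ^ 2 = ∑ i, x i ^ 2 :=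
  Real.sq_sqrt (Finset.sum_nonneg fun i _ => sq_nonneg (x i))

theorem evInner_self_aux {m : ℕ} (x : Fin m → ℝ) : evInner x x = evNorm x ^ 2 := by
  rw [evNorm_sq_aux]
  simp only [evInner, sq]

theorem mulVec_mem_colSpace_aux {m n : ℕ} (X : Matrix (Fin m) (Fin n) ℝ) (v : Fin n → ℝ) :
    X.mulVec v ∈ colSpace X := by
  have h : X.mulVec v = ∑ j, v j • (fun i => X i j) := by
    ext i
    simp [Matrix.mulVec, dotProduct, mul_comm]
  rw [h]
  exact Submodule.sum_mem _ fun j _ =>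
    Submodule.smul_mem _ _ (Submodule.subset_span ⟨j, rfl⟩)

theorem embedding_sq_aux {s m : ℕ} {ε : ℝ} {Ω : Matrix (Fin s) (Fin m) ℝ}
    {K : Submodule ℝ (Fin m → ℝ)} (h : IsSubspaceEmbedding ε Ω K) {x : Fin m → ℝ}
    (hx : x ∈ K) :
    (1 - ε) * evNorm x ^ 2 ≤ evNorm (Ω.mulVec x) ^ 2 ∧
      evNorm (Ω.mulVec x) ^ 2 ≤ (1 + ε) * evNorm x ^ 2 := by
  have h1 := h x hx x hx
  rw [evInner_self_aux, evInner_self_aux, abs_le] at h1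
  constructor <;> nlinarith [h1.1, h1.2]

theorem bddAbove_aux {m n : ℕ} (X : Matrix (Fin m) (Fin n) ℝ) :
    BddAbove (Set.range fun v : {v : Fin n → ℝ // evNorm v = 1} => evNorm (X.mulVec v.1)) := by
  refine ⟨frobeniusNorm X, ?_⟩
  rintro _ ⟨⟨v, hv⟩, rfl⟩
  refine Real.sqrt_le_sqrt (Finset.sum_le_sum fun i _ => ?_)
  have h2 : ∑ j, v j ^ 2 = 1 := by rw [← evNorm_sq_aux, hv, one_pow]
  have h3 := Finset.sum_mul_sq_le_sq_mul_sq Finset.univ (X i) v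
  rw [h2, mul_one] at h3
  exact h3

theorem bddBelow_aux {m n : ℕ} (X : Matrix (Fin m) (Fin n) ℝ) :
    BddBelow (Set.range fun v : {v : Fin n → ℝ // evNorm v = 1} => evNorm (X.mulVec v.1)) := by
  refine ⟨0, ?_⟩
  rintro _ ⟨v, rfl⟩
  exact evNorm_nonneg_aux _

theorem le_of_sq_le_sq_aux {a b : ℝ} (h : a ^ 2 ≤ b ^ 2) (hb : 0 ≤ b) : a ≤ b :=
  abs_le_of_sq_le_sq' h hb |>.2

/-- Multi-sketching, singular values: for `m ≥ n`,
`√(1−ε_s)·σ_min(X) ≤ σ_min(Ω₂Ω₁X) ≤ ‖Ω₂Ω₁X‖₂ ≤ √(1+ε_b)·‖X‖₂`. -/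
theorem multiSketch_sigmaMin_bounds {s₁ s₂ m n : ℕ} {ε₁ ε₂ : ℝ}
    (hmn : m ≥ n)
    (hε₁0 : 0 ≤ ε₁) (hε₁1 : ε₁ < 1) (hε₂0 : 0 ≤ ε₂) (hε₂1 : ε₂ < 1)
    (X : Matrix (Fin m) (Fin n) ℝ)
    (Ω₁ : Matrix (Fin s₁) (Fin m) ℝ) (Ω₂ : Matrix (Fin s₂) (Fin s₁) ℝ)
    (hΩ₁ : IsSubspaceEmbedding ε₁ Ω₁ (colSpace X))
    (hΩ₂ : IsSubspaceEmbedding ε₂ Ω₂ (colSpace (Ω₁ * X))) :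
    Real.sqrt (1 - (ε₁ + ε₂ - ε₁ * ε₂)) * sigmaMin X ≤ sigmaMin (Ω₂ * Ω₁ * X) ∧
      sigmaMin (Ω₂ * Ω₁ * X) ≤ matSpectralNorm (Ω₂ * Ω₁ * X) ∧
        matSpectralNorm (Ω₂ * Ω₁ * X) ≤
          Real.sqrt (1 + (ε₁ + ε₂ + ε₁ * ε₂)) * matSpectralNorm X := by
  have key : ∀ v : Fin n → ℝ,
      Real.sqrt (1 - (ε₁ + ε₂ - ε₁ * ε₂)) * evNorm (X.mulVec v) ≤
        evNorm ((Ω₂ * Ω₁ * X).mulVec v) ∧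
      evNorm ((Ω₂ * Ω₁ * X).mulVec v) ≤
        Real.sqrt (1 + (ε₁ + ε₂ + ε₁ * ε₂)) * evNorm (X.mulVec v) := by
    intro v
    have a := embedding_sq_aux hΩ₁ (mulVec_mem_colSpace_aux X v)
    have b := embedding_sq_aux hΩ₂ (mulVec_mem_colSpace_aux (Ω₁ * X) v)
    rw [Matrix.mulVec_mulVec] at a b
    rw [← Matrix.mul_assoc] at b
    constructor
    · refine le_of_sq_le_sq_aux ?_ (evNorm_nonneg_aux _)
      rw [mul_pow, Real.sq_sqrt (by nlinarith)]
      nlinarith [mul_le_mul_of_nonneg_left a.1 (by linarith : 0 ≤ 1 - ε₂), b.1]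
    · refine le_of_sq_le_sq_aux ?_ (mul_nonneg (Real.sqrt_nonneg _) (evNorm_nonneg_aux _))
      rw [mul_pow, Real.sq_sqrt (by positivity)]
      nlinarith [mul_le_mul_of_nonneg_left a.2 (by linarith : 0 ≤ 1 + ε₂), b.2]
  rcases isEmpty_or_nonempty {v : Fin n → ℝ // evNorm v = 1} with he | he
  · simp [sigmaMin, matSpectralNorm, Real.iInf_of_isEmpty, Real.iSup_of_isEmpty]
  refine ⟨?_, ?_, ?_⟩
  · refine le_ciInf fun v => le_trans ?_ (key v.1).1
    exact mul_le_mul_of_nonneg_left (ciInf_le (bddBelow_aux X) v) (Real.sqrt_nonneg _)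
  · exact ciInf_le_ciSup (bddBelow_aux _) (bddAbove_aux _)
  · refine ciSup_le fun v => le_trans (key v.1).2 ?_
    exact mul_le_mul_of_nonneg_left (le_ciSup (bddAbove_aux X) v) (Real.sqrt_nonneg _)
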